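/- For every fixed ε ∈ (0,1), the minimax MSE of block soft thresholding converges as the block size B → ∞: lim_{B→∞} M_B(ε|BlockSoft) = 2ε − ε². Moreover, if for each B the minimax threshold τ*(ε|B) is a minimizer over τ ≥ 0 of sup_{ν∈F_{ε,B}} (1/B) E ‖X − η^soft(X+Z;τ)‖₂², then lim_{B→∞} τ*(ε|B)/√B = 1 − ε. -/

import Mathlib

open MeasureTheory ProbabilityTheory ENNReal Filter

noncomputable section

/-- The standard Gaussian measure `N(0, I_B)` on `ℝ^B`. -/
def stdGaussian (B : ℕ) : Measure (Fin B → ℝ) :=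
  Measure.pi fun _ => gaussianReal 0 1

/-- Block soft thresholding `η^soft(y;τ) = (1 - τ/‖y‖₂)₊ · y` on `ℝ^B`
(with `η^soft(0;τ) = 0`). -/
def blockSoft (B : ℕ) (τ : ℝ) (y : Fin B → ℝ) : Fin B → ℝ :=
  (max (1 - τ / Real.sqrt (∑ i, (y i) ^ 2)) 0) • y

/-- The class `F_{ε,B}` of Borel probability measures `ν` on `ℝ^B` with
`ν({0}) ≥ 1 - ε`. -/
def sparseClass (B : ℕ) (ε : ℝ) : Set (Measure (Fin B → ℝ)) :=
  {ν | IsProbabilityMeasure ν ∧ ENNReal.ofReal (1 - ε) ≤ ν {0}}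

/-- Worst-case MSE `sup_{ν ∈ F_{ε,B}} E ‖X - η^soft(X+Z;τ)‖₂²` of block soft
thresholding at threshold `τ`, with `X ∼ ν`, `Z ∼ N(0,I_B)` independent. -/
def blockSoftWorst (B : ℕ) (ε : ℝ) (τ : ℝ) : ℝ≥0∞ :=
  ⨆ ν ∈ sparseClass B ε,
    ∫⁻ p, ENNReal.ofReal (∑ i, (p.1 i - blockSoft B τ (p.1 + p.2) i) ^ 2)
      ∂(ν.prod (stdGaussian B))

/-- The minimax MSE of block soft thresholding,
`M_B(ε|BlockSoft) = (1/B) inf_{τ ≥ 0} sup_{ν ∈ F_{ε,B}} E ‖X - η^soft(X+Z;τ)‖₂²`. -/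
def MBlockSoft (B : ℕ) (ε : ℝ) : ℝ≥0∞ :=
  (B : ℝ≥0∞)⁻¹ * ⨅ (τ : ℝ) (_ : 0 ≤ τ), blockSoftWorst B ε τ

def nrm {B : ℕ} (y : Fin B → ℝ) : ℝ := Real.sqrt (∑ i, (y i) ^ 2)

lemma nrm_nonneg {B : ℕ} (y : Fin B → ℝ) : 0 ≤ nrm y := Real.sqrt_nonneg _
lemma nrm_sq {B : ℕ} (y : Fin B → ℝ) : nrm y ^ 2 = ∑ i, (y i)^2 :=
  Real.sq_sqrt (Finset.sum_nonneg fun i _ => sq_nonneg _)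

lemma measurable_nrm {B : ℕ} : Measurable (nrm (B := B)) := by unfold nrm; fun_prop

instance (B : ℕ) : IsProbabilityMeasure (_root_.stdGaussian B) := by unfold _root_.stdGaussian; infer_instance

/-- shrink coefficient -/
def cf {B : ℕ} (τ : ℝ) (y : Fin B → ℝ) : ℝ := 1 - max (1 - τ / nrm y) 0

lemma cf_nonneg {B : ℕ} {τ : ℝ} (hτ : 0 ≤ τ) (y : Fin B → ℝ) : 0 ≤ cf τ y := by
  unfold cf
  have : 0 ≤ τ / nrm y := div_nonneg hτ (nrm_nonneg y)
  have : max (1 - τ / nrm y) 0 ≤ 1 := max_le (by linarith) (by norm_num)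
  linarith

lemma cf_mul {B : ℕ} {τ : ℝ} (hτ : 0 ≤ τ) (y : Fin B → ℝ) : cf τ y * nrm y = min τ (nrm y) := by
  unfold cf
  rcases (nrm_nonneg y).eq_or_lt with h | h
  · rw [← h]; simp [hτ]
  · rcases le_total τ (nrm y) with h1 | h1
    · have : τ / nrm y ≤ 1 := (div_le_one h).2 h1
      rw [max_eq_left (by linarith), min_eq_left h1]; field_simp; ring
    · have : 1 ≤ τ / nrm y := (one_le_div h).2 h1
      rw [max_eq_right (by linarith), min_eq_right h1]; ring

def loss {B : ℕ} (τ : ℝ) (x z : Fin B → ℝ) : ℝ := ∑ i, (x i - blockSoft B τ (x + z) i) ^ 2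

lemma loss_nonneg {B : ℕ} (τ : ℝ) (x z : Fin B → ℝ) : 0 ≤ loss τ x z :=
  Finset.sum_nonneg fun i _ => sq_nonneg _

lemma loss_eq {B : ℕ} (τ : ℝ) (x z : Fin B → ℝ) :
    loss τ x z = ∑ i, (cf τ (x + z) * (x i + z i) - z i) ^ 2 := by
  unfold loss blockSoft cf nrm
  refine Finset.sum_congr rfl fun i _ => ?_
  simp only [Pi.smul_apply, smul_eq_mul, Pi.add_apply]
  ring

lemma loss_expand {B : ℕ} (τ : ℝ) (x z : Fin B → ℝ) :
    loss τ x z = (cf τ (x + z) * nrm (x+z))^2 - 2 * cf τ (x+z) * (∑ i, (x i + z i) * z i)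
      + ∑ i, z i ^ 2 := by
  rw [loss_eq, mul_pow, nrm_sq, Finset.mul_sum, Finset.mul_sum, ← Finset.sum_sub_distrib,
    ← Finset.sum_add_distrib]
  refine Finset.sum_congr rfl fun i _ => ?_
  simp only [Pi.add_apply]
  ring

lemma loss_le {B : ℕ} {τ : ℝ} (hτ : 0 ≤ τ) (x z : Fin B → ℝ) :
    loss τ x z ≤ τ ^ 2 + ∑ i, z i ^ 2 - 2 * cf τ x * ∑ i, x i * z i := by
  rw [loss_expand]
  set y := x + z with hy
  have hcs : ∑ i, x i * y i ≤ nrm x * nrm y := Real.sum_mul_le_sqrt_mul_sqrt _ _ _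
  have h1 : ∑ i, (x i + z i) * z i = nrm y ^ 2 - ∑ i, x i * y i := by
    rw [nrm_sq, ← Finset.sum_sub_distrib]
    refine Finset.sum_congr rfl fun i _ => ?_
    simp only [hy, Pi.add_apply]; ring
  have h2 : ∑ i, x i * z i = ∑ i, x i * y i - nrm x ^ 2 := by
    rw [nrm_sq, ← Finset.sum_sub_distrib]
    refine Finset.sum_congr rfl fun i _ => ?_
    simp only [hy, Pi.add_apply]; ring
  rw [h1, h2]
  have cx := cf_nonneg hτ x
  have cy := cf_nonneg hτ y
  have ex := cf_mul hτ x
  have ey := cf_mul hτ y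
  have h3 : (cf τ y * nrm y)^2 ≤ τ^2 := by
    rw [ey]
    exact pow_le_pow_left₀ (le_min hτ (nrm_nonneg y)) (min_le_left _ _) 2
  have h4 : 0 ≤ (cf τ y * nrm y - cf τ x * nrm x) * (nrm y - nrm x) := by
    rw [ex, ey]
    rcases le_total (nrm x) (nrm y) with h | h
    · exact mul_nonneg (sub_nonneg.2 (min_le_min le_rfl h)) (sub_nonneg.2 h)
    · exact mul_nonneg_of_nonpos_of_nonpos (sub_nonpos.2 (min_le_min le_rfl h)) (sub_nonpos.2 h)
  have h5 := mul_le_mul_of_nonneg_left hcs (add_nonneg cx cy)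
  nlinarith

lemma loss_zero {B : ℕ} {τ : ℝ} (hτ : 0 ≤ τ) (z : Fin B → ℝ) :
    loss τ 0 z = (max (nrm z - τ) 0)^2 := by
  have h1 := cf_mul hτ z
  have : loss τ 0 z = (nrm z - cf τ z * nrm z)^2 := by
    rw [loss_eq, show (nrm z - cf τ z * nrm z)^2 = (1 - cf τ z)^2 * nrm z ^2 by ring, nrm_sq,
      Finset.mul_sum]
    refine Finset.sum_congr rfl fun i _ => ?_
    simp only [Pi.zero_apply, zero_add]; ring
  rw [this, h1]
  congr 1
  rcases le_total τ (nrm z) with h | h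
  · rw [min_eq_left h, max_eq_left (by linarith)]
  · rw [min_eq_right h, max_eq_right (by linarith)]; ring

lemma measurable_loss {B : ℕ} (τ : ℝ) :
    Measurable fun p : (Fin B → ℝ) × (Fin B → ℝ) => loss τ p.1 p.2 := by
  have h : ∀ i : Fin B, Measurable fun p : (Fin B → ℝ) × (Fin B → ℝ) => (p.1 i + p.2 i) := by
    intro i; fun_prop
  have hn : Measurable fun p : (Fin B → ℝ) × (Fin B → ℝ) => nrm (p.1 + p.2) :=
    measurable_nrm.comp (measurable_fst.add measurable_snd)
  simp only [loss_eq, cf]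
  refine Finset.measurable_sum _ fun i _ => ?_
  have h2 : Measurable fun p : (Fin B → ℝ) × (Fin B → ℝ) => (1 - max (1 - τ / nrm (p.1 + p.2)) 0) :=
    measurable_const.sub ((measurable_const.sub (measurable_const.div hn)).max measurable_const)
  have h3 : Measurable fun p : (Fin B → ℝ) × (Fin B → ℝ) => p.2 i := by fun_prop
  exact ((h2.mul (h i)).sub h3).pow_const 2


/-! Gaussian moments -/

abbrev GG (B : ℕ) : Measure (Fin B → ℝ) := _root_.stdGaussian B

lemma memLp_sq : MemLp (fun x : ℝ => x ^ 2) 2 (gaussianReal 0 1) := by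
  rw [memLp_two_iff_integrable_sq (by fun_prop)]
  have h := (memLp_id_gaussianReal (μ := 0) (v := 1) 4).integrable_norm_pow (p := 4) (by norm_num)
  refine h.congr (Eventually.of_forall fun x => ?_)
  simp only [id, Real.norm_eq_abs]
  rw [← pow_mul]
  exact (show Even 4 by decide).pow_abs x

lemma int_sq : ∫ x : ℝ, x ^ 2 ∂(gaussianReal 0 1) = 1 := by
  have h := variance_eq_sub (memLp_id_gaussianReal (μ := 0) (v := 1) 2)
  rw [variance_id_gaussianReal] at h
  simpa using h.symm

lemma integrable_coord {B : ℕ} (i : Fin B) : Integrable (fun z : Fin B → ℝ => z i) (GG B) :=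
  integrable_comp_eval (μ := fun _ : Fin B => gaussianReal 0 1) (i := i) (f := fun x : ℝ => x)
    ((memLp_id_gaussianReal (μ := 0) (v := 1) 1).integrable (by norm_num))

lemma integral_coord {B : ℕ} (i : Fin B) : ∫ z, z i ∂(GG B) = 0 := by
  have := integral_comp_eval (μ := fun _ : Fin B => gaussianReal 0 1) (i := i)
    (f := fun x : ℝ => x) (by fun_prop)
  rw [integral_id_gaussianReal] at this
  exact this

lemma integrable_coord_sq {B : ℕ} (i : Fin B) :
    Integrable (fun z : Fin B → ℝ => z i ^ 2) (GG B) :=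
  integrable_comp_eval (μ := fun _ : Fin B => gaussianReal 0 1) (i := i) (f := fun x : ℝ => x ^ 2) (memLp_sq.integrable (by norm_num))

lemma integral_coord_sq {B : ℕ} (i : Fin B) : ∫ z, z i ^ 2 ∂(GG B) = 1 := by
  have := integral_comp_eval (μ := fun _ : Fin B => gaussianReal 0 1) (i := i)
    (f := fun x : ℝ => x ^ 2) (by fun_prop)
  rw [int_sq] at this
  exact this

lemma integrable_S (B : ℕ) : Integrable (fun z : Fin B → ℝ => ∑ i, z i ^ 2) (GG B) :=
  integrable_finsetSum _ fun i _ => integrable_coord_sq i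

lemma integral_S (B : ℕ) : ∫ z, ∑ i, z i ^ 2 ∂(GG B) = B := by
  rw [integral_finsetSum _ fun i _ => integrable_coord_sq i]
  simp [integral_coord_sq]

lemma integrable_lin {B : ℕ} (x : Fin B → ℝ) :
    Integrable (fun z : Fin B → ℝ => ∑ i, x i * z i) (GG B) :=
  integrable_finsetSum _ fun i _ => (integrable_coord i).const_mul _

lemma integral_lin {B : ℕ} (x : Fin B → ℝ) : ∫ z, ∑ i, x i * z i ∂(GG B) = 0 := by
  rw [integral_finsetSum _ fun i _ => (integrable_coord i).const_mul _]
  simp [integral_const_mul, integral_coord]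

lemma memLp_nrm (B : ℕ) : MemLp (nrm (B := B)) 2 (GG B) := by
  rw [memLp_two_iff_integrable_sq measurable_nrm.aestronglyMeasurable]
  simp only [nrm_sq]
  exact integrable_S B

lemma integrable_nrm (B : ℕ) : Integrable (nrm (B := B)) (GG B) :=
  (memLp_nrm B).integrable (by norm_num)

/-- mean norm -/
def mu (B : ℕ) : ℝ := ∫ z, nrm z ∂(GG B)

lemma mu_nonneg (B : ℕ) : 0 ≤ mu B := integral_nonneg nrm_nonneg

lemma mu_sq_le (B : ℕ) : mu B ^ 2 ≤ B := by
  have h := variance_eq_sub (memLp_nrm B)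
  have h2 := variance_nonneg (nrm (B := B)) (GG B)
  have h3 : ∫ z, ((nrm (B := B)) ^ 2) z ∂(GG B) = B := by
    simp only [Pi.pow_apply, nrm_sq]; exact integral_S B
  rw [h3] at h
  unfold mu
  linarith

def VV : ℝ := Var[fun x : ℝ => x ^ 2; gaussianReal 0 1]

lemma memLp_S (B : ℕ) : MemLp (fun z : Fin B → ℝ => ∑ i, z i ^ 2) 2 (GG B) := by
  refine memLp_finsetSum _ fun i _ => ?_
  exact memLp_sq.comp_measurePreserving (measurePreserving_eval (fun _ : Fin B => gaussianReal 0 1) i)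

lemma integral_S_sq (B : ℕ) : ∫ z, (∑ i, z i ^ 2) ^ 2 ∂(GG B) = B ^ 2 + B * VV := by
  have h := variance_sum_pi (μ := fun _ : Fin B => gaussianReal 0 1)
    (X := fun _ x => x ^ 2) (fun _ => memLp_sq)
  have e : (∑ i : Fin B, fun ω : Fin B → ℝ => ω i ^ 2) = fun z => ∑ i, z i ^ 2 := by
    ext z; simp
  rw [e] at h
  have h2 := variance_eq_sub (memLp_S B)
  have h3 : Var[fun z : Fin B → ℝ => ∑ i, z i ^ 2; GG B] = B * VV := by
    refine h.trans ?_
    simp [VV]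
  rw [h3, integral_S] at h2
  simp only [Pi.pow_apply] at h2
  linarith

lemma mu_ge {B : ℕ} (hB : 1 ≤ B) : 1 - VV / (2 * B) ≤ mu B / Real.sqrt B := by
  have hb : (0:ℝ) < B := by exact_mod_cast hB
  have hs : 0 < Real.sqrt B := Real.sqrt_pos.2 hb
  have hss : Real.sqrt B ^ 2 = B := Real.sq_sqrt hb.le
  have hpt : ∀ z : Fin B → ℝ, (3 * ∑ i, z i ^ 2) / (2 * B) - (∑ i, z i ^ 2)^2 / (2 * B^2)
      ≤ nrm z / Real.sqrt B := by
    intro z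
    rw [← nrm_sq]
    set v := nrm z / Real.sqrt B with hv
    have hv0 : 0 ≤ v := div_nonneg (nrm_nonneg z) hs.le
    have e : nrm z = v * Real.sqrt B := by rw [hv]; field_simp
    have : 3 * (v * √B) ^ 2 / (2 * √B ^ 2) - ((v * √B) ^ 2) ^ 2 / (2 * (√B ^ 2) ^ 2)
      = v * (3 * v - v ^ 3) / 2 := by field_simp
    rw [← e, hss] at this
    rw [this]
    nlinarith [mul_nonneg hv0 (mul_nonneg (sq_nonneg (v-1)) (by linarith : (0:ℝ) ≤ v + 2))]
  have i1 : Integrable (fun z : Fin B → ℝ => (3 * ∑ i, z i ^ 2) / (2 * B)) (GG B) :=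
    ((integrable_S B).const_mul 3).div_const _
  have i2 : Integrable (fun z : Fin B → ℝ => (∑ i, z i ^ 2)^2 / (2 * (B:ℝ)^2)) (GG B) :=
    ((memLp_S B).integrable_sq).div_const _
  have h := integral_mono (i1.sub i2) ((integrable_nrm B).div_const (Real.sqrt B)) hpt
  simp only [Pi.sub_apply] at h
  rw [integral_sub i1 i2, integral_div, integral_div, integral_div, integral_const_mul, integral_S,
    integral_S_sq] at h
  refine le_trans (le_of_eq ?_) h
  field_simp
  ring

lemma tendsto_mu : Tendsto (fun B : ℕ => mu B / Real.sqrt B) atTop (nhds 1) := by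
  have h1 : Tendsto (fun B : ℕ => 1 - VV / (2 * (B:ℝ))) atTop (nhds 1) := by
    have : Tendsto (fun B : ℕ => VV / (2 * (B:ℝ))) atTop (nhds 0) :=
      Tendsto.const_div_atTop (tendsto_natCast_atTop_atTop.const_mul_atTop (by norm_num)) _
    simpa using tendsto_const_nhds.sub this
  refine tendsto_of_tendsto_of_tendsto_of_le_of_le' h1 tendsto_const_nhds ?_ ?_
  · filter_upwards [eventually_ge_atTop 1] with B hB using mu_ge hB
  · filter_upwards [eventually_ge_atTop 1] with B hB
    have hb : (0:ℝ) < B := by exact_mod_cast hB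
    rw [div_le_one (Real.sqrt_pos.2 hb)]
    exact Real.le_sqrt_of_sq_le (mu_sq_le B)

/-! Risk bounds -/

def risk {B : ℕ} (τ : ℝ) (x : Fin B → ℝ) : ℝ≥0∞ := ∫⁻ z, ENNReal.ofReal (loss τ x z) ∂(GG B)

lemma risk_le {B : ℕ} {τ : ℝ} (hτ : 0 ≤ τ) (x : Fin B → ℝ) :
    risk τ x ≤ ENNReal.ofReal (B + τ ^ 2) := by
  have hi : Integrable (fun z : Fin B → ℝ => τ ^ 2 + ∑ i, z i ^ 2 - 2 * cf τ x * ∑ i, x i * z i)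
    (GG B) := ((integrable_const _).add (integrable_S B)).sub ((integrable_lin x).const_mul _)
  have he : ∫ z, (τ ^ 2 + ∑ i, z i ^ 2 - 2 * cf τ x * ∑ i, x i * z i) ∂(GG B) = B + τ ^ 2 := by
    rw [integral_sub (by exact (integrable_const _).add (integrable_S B))
      ((integrable_lin x).const_mul _), integral_add (integrable_const _) (integrable_S B),
      integral_const_mul, integral_lin, integral_S]
    simp; ring
  rw [← he, ofReal_integral_eq_lintegral_ofReal hi
    (Eventually.of_forall fun z => (loss_nonneg τ x z).trans (loss_le hτ x z))]
  exact lintegral_mono fun z => ENNReal.ofReal_le_ofReal (loss_le hτ x z)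

lemma risk_zero_le {B : ℕ} {τ : ℝ} (hτ : 0 ≤ τ) :
    risk τ (0 : Fin B → ℝ) ≤ ENNReal.ofReal (B - 2 * τ * mu B + τ ^ 2) := by
  have hi : Integrable (fun z : Fin B → ℝ => ∑ i, z i ^ 2 - 2 * τ * nrm z + τ ^ 2) (GG B) :=
    ((integrable_S B).sub ((integrable_nrm B).const_mul _)).add (integrable_const _)
  have he : ∫ z : Fin B → ℝ, (∑ i, z i ^ 2 - 2 * τ * nrm z + τ ^ 2) ∂(GG B)
      = B - 2 * τ * mu B + τ ^ 2 := by
    rw [integral_add (by exact (integrable_S B).sub ((integrable_nrm B).const_mul _))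
      (integrable_const _), integral_sub (integrable_S B) ((integrable_nrm B).const_mul _),
      integral_const_mul, integral_S]
    simp [mu]
  have e : ∀ z : Fin B → ℝ, ∑ i, z i ^ 2 - 2 * τ * nrm z + τ ^ 2 = (nrm z - τ) ^ 2 := by
    intro z; rw [← nrm_sq]; ring
  have hz : ∀ z : Fin B → ℝ, loss τ 0 z ≤ ∑ i, z i ^ 2 - 2 * τ * nrm z + τ ^ 2 := by
    intro z
    rw [e, loss_zero hτ]
    rcases le_total (nrm z - τ) 0 with h | h
    · rw [max_eq_right h]; nlinarith [sq_nonneg (nrm z - τ)]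
    · rw [max_eq_left h]
  rw [← he, ofReal_integral_eq_lintegral_ofReal hi
    (Eventually.of_forall fun z => (loss_nonneg τ 0 z).trans (hz z))]
  exact lintegral_mono fun z => ENNReal.ofReal_le_ofReal (hz z)

lemma risk_zero_ge {B : ℕ} {τ : ℝ} (hτ : 0 ≤ τ) :
    ENNReal.ofReal ((max (mu B - τ) 0) ^ 2) ≤ risk τ (0 : Fin B → ℝ) := by
  by_cases hfin : risk τ (0 : Fin B → ℝ) = ⊤
  · rw [hfin]; exact le_top
  set k := max (mu B - τ) 0 with hk
  have hk0 : 0 ≤ k := le_max_right _ _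
  have hm : Measurable fun z : Fin B → ℝ => loss τ 0 z := by
    simp only [loss_zero hτ]
    exact ((measurable_nrm.sub_const _).max measurable_const).pow_const 2
  have hi : Integrable (fun z : Fin B → ℝ => loss τ 0 z) (GG B) := by
    refine ⟨hm.aestronglyMeasurable, ?_⟩
    rw [hasFiniteIntegral_iff_ofReal (Eventually.of_forall fun z => loss_nonneg τ 0 z)]
    exact lt_top_iff_ne_top.2 hfin
  unfold risk
  rw [← ofReal_integral_eq_lintegral_ofReal hi (Eventually.of_forall fun z => loss_nonneg τ 0 z)]
  refine ENNReal.ofReal_le_ofReal ?_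
  have hj : Integrable (fun z : Fin B → ℝ => 2 * k * (nrm z - τ) - k ^ 2) (GG B) :=
    (((integrable_nrm B).sub (integrable_const _)).const_mul _).sub (integrable_const _)
  have h := integral_mono hj hi (fun z => by
    simp only [loss_zero hτ]
    have := le_max_left (nrm z - τ) 0
    nlinarith [sq_nonneg (max (nrm z - τ) 0 - k), mul_le_mul_of_nonneg_left this hk0])
  refine le_trans (le_of_eq ?_) h
  rw [integral_sub (by exact ((integrable_nrm B).sub (integrable_const _)).const_mul _)
    (integrable_const _), integral_const_mul, integral_sub (integrable_nrm B) (integrable_const _)]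
  simp only [integral_const, probReal_univ, one_smul]
  change k ^ 2 = 2 * k * (mu B - τ) - k ^ 2
  rcases le_total (mu B - τ) 0 with h | h
  · have : k = 0 := max_eq_right h
    rw [this]; ring
  · have : k = mu B - τ := max_eq_left h
    rw [this]; ring

/-- far point -/
def far {B : ℕ} (j : Fin B) (n : ℕ) : Fin B → ℝ := fun i => if i = j then (n : ℝ) else 0

lemma nrm_smul {B : ℕ} {a : ℝ} (ha : 0 ≤ a) (h : Fin B → ℝ) : nrm (a • h) = a * nrm h := by
  unfold nrm
  simp only [Pi.smul_apply, smul_eq_mul, mul_pow, ← Finset.mul_sum]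
  rw [Real.sqrt_mul (sq_nonneg a), Real.sqrt_sq ha]

lemma continuous_nrm {B : ℕ} : Continuous (nrm (B := B)) := by
  unfold nrm; fun_prop

lemma tendsto_loss_far {B : ℕ} (j : Fin B) {τ : ℝ} (hτ : 0 ≤ τ) (z : Fin B → ℝ) :
    Tendsto (fun n : ℕ => loss τ (far j n) z) atTop
      (nhds (∑ i, (τ * (if i = j then 1 else 0) - z i) ^ 2)) := by
  set e : Fin B → ℝ := fun i => if i = j then 1 else 0 with he
  let h : ℕ → Fin B → ℝ := fun n => e + (n : ℝ)⁻¹ • z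
  have hh : Tendsto h atTop (nhds e) := by
    have : Tendsto (fun n : ℕ => (n : ℝ)⁻¹ • z) atTop (nhds ((0:ℝ) • z)) :=
      (tendsto_inv_atTop_nhds_zero_nat (𝕜 := ℝ)).smul_const z
    simpa [h] using tendsto_const_nhds (x := e).add this
  have hne : nrm e = 1 := by simp [nrm, he]
  have hN : Tendsto (fun n => nrm (h n)) atTop (nhds 1) := by
    rw [← hne]; exact (continuous_nrm.tendsto e).comp hh
  have hc : Tendsto (fun n => τ / nrm (h n)) atTop (nhds τ) := by
    have := tendsto_const_nhds (x := τ) (f := atTop (α := ℕ)) |>.div hN one_ne_zero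
    rw [div_one] at this
    exact this
  have hlim : Tendsto (fun n => ∑ i, (τ / nrm (h n) * h n i - z i) ^ 2) atTop
      (nhds (∑ i, (τ * e i - z i) ^ 2)) := by
    refine tendsto_finsetSum _ fun i _ => ?_
    exact ((hc.mul (tendsto_pi_nhds.1 hh i)).sub_const _).pow 2
  refine hlim.congr' ?_
  have hbig : ∀ᶠ n : ℕ in atTop, τ + 1 ≤ (n : ℝ) :=
    tendsto_natCast_atTop_atTop.eventually_ge_atTop _
  filter_upwards [hbig, hc.eventually_lt_const (lt_add_one τ), hN.eventually_const_lt one_pos]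
    with n hn hlt hpos
  have hn0 : (0:ℝ) < n := by linarith
  have hy : far j n + z = (n : ℝ) • h n := by
    ext i
    simp only [far, h, he, Pi.add_apply, Pi.smul_apply, smul_eq_mul]
    split_ifs <;> field_simp
    simp
  rw [loss_eq]
  have hcf : cf τ (far j n + z) = τ / nrm (h n) / n := by
    unfold cf
    rw [hy, nrm_smul hn0.le]
    have e2 : τ / (n * nrm (h n)) = τ / nrm (h n) / n := by field_simp
    have : τ / nrm (h n) / n ≤ 1 := by rw [div_le_one hn0]; linarith
    rw [e2, max_eq_left (by linarith)]; ring
  rw [hcf]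
  refine Finset.sum_congr rfl fun i _ => ?_
  have hyi : far j n i + z i = n * h n i := congrFun hy i
  rw [hyi]
  congr 2
  field_simp

lemma measurable_loss_right {B : ℕ} (τ : ℝ) (x : Fin B → ℝ) : Measurable (loss τ x) :=
  (measurable_loss τ).comp (measurable_const.prodMk measurable_id)

lemma risk_far {B : ℕ} (j : Fin B) {τ : ℝ} (hτ : 0 ≤ τ) :
    ENNReal.ofReal (B + τ ^ 2) ≤ ⨆ n : ℕ, risk τ (far j n) := by
  have h1 : ∫⁻ z, liminf (fun n : ℕ => ENNReal.ofReal (loss τ (far j n) z)) atTop ∂(GG B)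
      ≤ liminf (fun n : ℕ => risk τ (far j n)) atTop :=
    lintegral_liminf_le fun n => (measurable_loss_right τ _).ennreal_ofReal
  have h2 : liminf (fun n : ℕ => risk τ (far j n)) atTop ≤ ⨆ n : ℕ, risk τ (far j n) :=
    liminf_le_of_le (by isBoundedDefault) fun b hb => by
      obtain ⟨n, hn⟩ := hb.exists
      exact hn.trans (le_iSup (fun n => risk τ (far j n)) n)
  refine le_trans (le_of_eq ?_) (h1.trans h2)
  have h3 : ∀ z : Fin B → ℝ, liminf (fun n : ℕ => ENNReal.ofReal (loss τ (far j n) z)) atTop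
      = ENNReal.ofReal (∑ i, (τ * (if i = j then 1 else 0) - z i) ^ 2) := fun z =>
    ((ENNReal.continuous_ofReal.tendsto _).comp (tendsto_loss_far j hτ z)).liminf_eq
  simp only [h3]
  have h4 : ∀ z : Fin B → ℝ, ∑ i, (τ * (if i = j then 1 else 0) - z i) ^ 2
      = τ ^ 2 + ∑ i, z i ^ 2 - 2 * τ * z j := by
    intro z
    have : ∀ i, (τ * (if i = j then 1 else 0) - z i) ^ 2
      = (if i = j then τ ^ 2 - 2 * τ * z i else 0) + z i ^ 2 := by
      intro i; split_ifs <;> ring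
    simp only [this, Finset.sum_add_distrib]
    simp; ring
  have hi : Integrable (fun z : Fin B → ℝ => τ ^ 2 + ∑ i, z i ^ 2 - 2 * τ * z j) (GG B) :=
    ((integrable_const _).add (integrable_S B)).sub ((integrable_coord j).const_mul _)
  have hE : ∫ z, (τ ^ 2 + ∑ i, z i ^ 2 - 2 * τ * z j) ∂(GG B) = B + τ ^ 2 := by
    rw [integral_sub (by exact (integrable_const _).add (integrable_S B))
      ((integrable_coord j).const_mul _), integral_add (integrable_const _) (integrable_S B),
      integral_const_mul, integral_coord, integral_S]
    simp; ring
  rw [← hE, ofReal_integral_eq_lintegral_ofReal hi (Eventually.of_forall fun z => by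
    change 0 ≤ τ ^ 2 + ∑ i, z i ^ 2 - 2 * τ * z j
    rw [← h4]; exact Finset.sum_nonneg fun i _ => sq_nonneg _)]
  simp only [h4]

lemma worst_eq (B : ℕ) (ε τ : ℝ) : blockSoftWorst B ε τ =
    ⨆ ν ∈ sparseClass B ε, ∫⁻ p, ENNReal.ofReal (loss τ p.1 p.2) ∂(ν.prod (GG B)) := rfl

lemma worst_le {B : ℕ} {ε τ : ℝ} (hε0 : 0 < ε) (hε1 : ε < 1) (hτ : 0 ≤ τ) :
    blockSoftWorst B ε τ ≤
      ENNReal.ofReal ((1 - ε) * (B - 2 * τ * mu B + τ ^ 2) + ε * (B + τ ^ 2)) := by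
  rw [worst_eq]
  refine iSup₂_le fun ν hν => ?_
  obtain ⟨hp, hν0⟩ := hν
  refine (lintegral_prod_le _).trans ?_
  change ∫⁻ x, risk τ x ∂ν ≤ _
  set a : ℝ := B - 2 * τ * mu B + τ ^ 2 with ha
  set b : ℝ := B + τ ^ 2 with hb
  have ha0 : 0 ≤ a := by nlinarith [mu_sq_le B, sq_nonneg (mu B - τ)]
  have hab : a ≤ b := by nlinarith [mul_nonneg hτ (mu_nonneg B)]
  have hms : MeasurableSet ({0} : Set (Fin B → ℝ)) := measurableSet_singleton 0
  have h1 : ∫⁻ x, risk τ x ∂ν ≤ ENNReal.ofReal a * ν {0} + ENNReal.ofReal b * ν {0}ᶜ := by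
    rw [← lintegral_add_compl _ hms]
    refine add_le_add ?_ ?_
    · rw [← setLIntegral_const]
      refine setLIntegral_mono measurable_const fun x hx => ?_
      rw [Set.mem_singleton_iff.1 hx]; exact risk_zero_le hτ
    · rw [← setLIntegral_const]
      exact setLIntegral_mono measurable_const fun x _ => risk_le hτ x
  refine h1.trans ?_
  set q : ℝ := ν.real {0} with hq
  have e1 : ν {0} = ENNReal.ofReal q := (ofReal_measureReal).symm
  have e2 : ν {0}ᶜ = ENNReal.ofReal (1 - q) := by
    rw [hq, ← probReal_compl_eq_one_sub hms]; exact (ofReal_measureReal).symm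
  have hq0 : 0 ≤ q := measureReal_nonneg
  have hq1 : q ≤ 1 := measureReal_le_one
  have hqe : 1 - ε ≤ q := by rwa [e1, ENNReal.ofReal_le_ofReal_iff hq0] at hν0
  rw [e1, e2, ← ENNReal.ofReal_mul ha0, ← ENNReal.ofReal_mul (ha0.trans hab),
    ← ENNReal.ofReal_add (mul_nonneg ha0 hq0) (mul_nonneg (ha0.trans hab) (by linarith))]
  refine ENNReal.ofReal_le_ofReal ?_
  nlinarith

lemma worst_ge {B : ℕ} (hB : 1 ≤ B) {ε τ : ℝ} (hε0 : 0 < ε) (hε1 : ε < 1) (hτ : 0 ≤ τ) :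
    ENNReal.ofReal ((1 - ε) * (max (mu B - τ) 0) ^ 2 + ε * (B + τ ^ 2)) ≤
      blockSoftWorst B ε τ := by
  have hx : ∀ x : Fin B → ℝ, ENNReal.ofReal (1 - ε) * risk τ (0 : Fin B → ℝ) + ENNReal.ofReal ε * risk τ x
      ≤ blockSoftWorst B ε τ := by
    intro x
    rw [worst_eq]
    set ν : Measure (Fin B → ℝ) :=
      ENNReal.ofReal (1 - ε) • Measure.dirac 0 + ENNReal.ofReal ε • Measure.dirac x with hν
    have hprob : IsProbabilityMeasure ν := by
      constructor
      simp only [hν, Measure.add_apply, Measure.smul_apply, measure_univ, smul_eq_mul, mul_one]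
      rw [← ENNReal.ofReal_add (by linarith) hε0.le]
      simp
    have hmem : ν ∈ sparseClass B ε := by
      refine ⟨hprob, ?_⟩
      simp [hν]
    refine le_trans (le_of_eq ?_) (le_iSup₂ (f := fun ν (_ : ν ∈ sparseClass B ε) =>
      ∫⁻ p, ENNReal.ofReal (loss τ p.1 p.2) ∂(ν.prod (GG B))) ν hmem)
    have hM : Measurable fun p : (Fin B → ℝ) × (Fin B → ℝ) => ENNReal.ofReal (loss τ p.1 p.2) :=
      (measurable_loss τ).ennreal_ofReal
    rw [lintegral_prod _ hM.aemeasurable, hν, lintegral_add_measure, lintegral_smul_measure,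
      lintegral_smul_measure, lintegral_dirac' _ hM.lintegral_prod_right',
      lintegral_dirac' _ hM.lintegral_prod_right']
    rfl
  have hs : ENNReal.ofReal (1 - ε) * risk τ (0 : Fin B → ℝ)
      + ENNReal.ofReal ε * ⨆ n : ℕ, risk τ (far ⟨0, hB⟩ n) ≤ blockSoftWorst B ε τ := by
    rw [ENNReal.mul_iSup, ENNReal.add_iSup]
    exact iSup_le fun n => hx _
  refine le_trans ?_ hs
  rw [ENNReal.ofReal_add (mul_nonneg (by linarith) (sq_nonneg _)) (by positivity),
    ENNReal.ofReal_mul (by linarith), ENNReal.ofReal_mul hε0.le]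
  gcongr
  · exact risk_zero_ge hτ
  · exact risk_far _ hτ

lemma inv_mul_ofReal {B : ℕ} (hB : 1 ≤ B) (a : ℝ) :
    (B : ℝ≥0∞)⁻¹ * ENNReal.ofReal a = ENNReal.ofReal (a / B) := by
  have hb : (0:ℝ) < B := by exact_mod_cast hB
  rw [ENNReal.ofReal_div_of_pos hb, ENNReal.ofReal_natCast, div_eq_mul_inv, mul_comm]

lemma quad {ε m t : ℝ} (hε0 : 0 < ε) (hε1 : ε < 1) (hm : 0 ≤ m) :
    ε * (1 - ε) * m ^ 2 + ε * (t - (1 - ε) * m) ^ 2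
      ≤ (1 - ε) * (max (m - t) 0) ^ 2 + ε * t ^ 2 := by
  rcases le_total (m - t) 0 with h | h
  · rw [max_eq_right h]
    have h1 : 0 ≤ (1 - ε) * m * (2 * t - m - (1 - ε) * m) :=
      mul_nonneg (mul_nonneg (by linarith) hm) (by nlinarith)
    nlinarith [mul_nonneg hε0.le h1]
  · rw [max_eq_left h]
    have : 0 ≤ (1 - ε) * (t - (1 - ε) * m) ^ 2 := mul_nonneg (by linarith) (sq_nonneg _)
    nlinarith

lemma worst_ge' {B : ℕ} (hB : 1 ≤ B) {ε τ : ℝ} (hε0 : 0 < ε) (hε1 : ε < 1) (hτ : 0 ≤ τ) :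
    ENNReal.ofReal (ε + ε * (1 - ε) * (mu B / √B) ^ 2 + ε * (τ / √B - (1 - ε) * (mu B / √B)) ^ 2) ≤
      (B : ℝ≥0∞)⁻¹ * blockSoftWorst B ε τ := by
  refine le_trans ?_ (mul_le_mul_right (worst_ge hB hε0 hε1 hτ) _)
  rw [inv_mul_ofReal hB]
  refine ENNReal.ofReal_le_ofReal ?_
  have hb : (0:ℝ) < B := by exact_mod_cast hB
  have hs : 0 < Real.sqrt B := Real.sqrt_pos.2 hb
  have hss : Real.sqrt B ^ 2 = B := Real.sq_sqrt hb.le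
  have hq := quad (t := τ) hε0 hε1 (mu_nonneg B)
  rw [le_div_iff₀ hb]
  have e : (ε + ε * (1 - ε) * (mu B / √B) ^ 2 + ε * (τ / √B - (1 - ε) * (mu B / √B)) ^ 2) * B
    = ε * B + (ε * (1 - ε) * mu B ^ 2 + ε * (τ - (1 - ε) * mu B) ^ 2) := by
    have e1 : (mu B / √B) ^ 2 * B = mu B ^ 2 := by rw [div_pow, hss]; field_simp
    have e2 : (τ / √B - (1 - ε) * (mu B / √B)) ^ 2 * B = (τ - (1 - ε) * mu B) ^ 2 := by
      rw [show τ / √B - (1 - ε) * (mu B / √B) = (τ - (1 - ε) * mu B) / √B by ring, div_pow, hss]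
      field_simp
    linear_combination ε * (1 - ε) * e1 + ε * e2
  rw [e]; linarith

lemma MB_le {B : ℕ} (hB : 1 ≤ B) {ε : ℝ} (hε0 : 0 < ε) (hε1 : ε < 1) :
    MBlockSoft B ε ≤ ENNReal.ofReal (1 - (1 - ε) ^ 2 * (mu B / √B) ^ 2) := by
  have hb : (0:ℝ) < B := by exact_mod_cast hB
  have hs : 0 < Real.sqrt B := Real.sqrt_pos.2 hb
  have hss : Real.sqrt B ^ 2 = B := Real.sq_sqrt hb.le
  have hτ : 0 ≤ (1 - ε) * mu B := mul_nonneg (by linarith) (mu_nonneg B)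
  unfold MBlockSoft
  refine (mul_le_mul_right ((iInf₂_le _ hτ).trans (worst_le hε0 hε1 hτ)) _).trans ?_
  rw [inv_mul_ofReal hB]
  refine ENNReal.ofReal_le_ofReal (le_of_eq ?_)
  rw [div_pow, hss]
  field_simp
  ring

lemma MB_ge {B : ℕ} (hB : 1 ≤ B) {ε : ℝ} (hε0 : 0 < ε) (hε1 : ε < 1) :
    ENNReal.ofReal (ε + ε * (1 - ε) * (mu B / √B) ^ 2) ≤ MBlockSoft B ε := by
  have hb : (0:ℝ) < B := by exact_mod_cast hB
  unfold MBlockSoft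
  have h0 : (B : ℝ≥0∞) ≠ 0 := by simp; omega
  have ht : (B : ℝ≥0∞) ≠ ⊤ := by simp
  rw [← ENNReal.mul_le_iff_le_inv h0 ht]
  refine le_iInf₂ fun τ hτ => ?_
  rw [ENNReal.mul_le_iff_le_inv h0 ht]
  refine le_trans (ENNReal.ofReal_le_ofReal ?_) (worst_ge' hB hε0 hε1 hτ)
  nlinarith [mul_nonneg hε0.le (sq_nonneg (τ / √B - (1 - ε) * (mu B / √B)))]

/-- **Large-block limit of block soft thresholding.**
For fixed `ε ∈ (0,1)`: `lim_{B→∞} M_B(ε|BlockSoft) = 2ε − ε²`, and if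
`τ*(ε|B)` is, for each `B`, a nonnegative minimizer over `τ ≥ 0` of
`sup_{ν ∈ F_{ε,B}} (1/B) E ‖X − η^soft(X+Z;τ)‖₂²`, then
`lim_{B→∞} τ*(ε|B)/√B = 1 − ε`. -/
theorem blockSoft_minimax_largeB
    (ε : ℝ) (hε0 : 0 < ε) (hε1 : ε < 1)
    (τstar : ℕ → ℝ) (hτpos : ∀ B : ℕ, 0 ≤ τstar B)
    (hmin : ∀ B : ℕ, 1 ≤ B →
      (B : ℝ≥0∞)⁻¹ * blockSoftWorst B ε (τstar B) = MBlockSoft B ε) :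
    Tendsto (fun B : ℕ => MBlockSoft B ε) atTop
      (nhds (ENNReal.ofReal (2 * ε - ε ^ 2))) ∧
    Tendsto (fun B : ℕ => τstar B / Real.sqrt B) atTop (nhds (1 - ε)) := by

  have hm := tendsto_mu
  have hlo : Tendsto (fun B : ℕ => ε + ε * (1 - ε) * (mu B / √B) ^ 2) atTop
      (nhds (2 * ε - ε ^ 2)) := by
    have := ((hm.pow 2).const_mul (ε * (1 - ε))).const_add ε
    convert! this using 2; ring
  have hhi : Tendsto (fun B : ℕ => 1 - (1 - ε) ^ 2 * (mu B / √B) ^ 2) atTop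
      (nhds (2 * ε - ε ^ 2)) := by
    have := ((hm.pow 2).const_mul ((1 - ε) ^ 2)).const_sub 1
    convert! this using 2; ring
  refine ⟨?_, ?_⟩
  · refine tendsto_of_tendsto_of_tendsto_of_le_of_le' (ENNReal.tendsto_ofReal hlo)
      (ENNReal.tendsto_ofReal hhi) ?_ ?_
    · filter_upwards [eventually_ge_atTop 1] with B hB using MB_ge hB hε0 hε1
    · filter_upwards [eventually_ge_atTop 1] with B hB using MB_le hB hε0 hε1
  · have hsq : Tendsto (fun B : ℕ => (τstar B / √B - (1 - ε) * (mu B / √B)) ^ 2) atTop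
        (nhds 0) := by
      have hup : Tendsto (fun B : ℕ => ((1 - (1 - ε) ^ 2 * (mu B / √B) ^ 2)
          - (ε + ε * (1 - ε) * (mu B / √B) ^ 2)) / ε) atTop (nhds 0) := by
        have := (hhi.sub hlo).div_const ε
        simpa using this
      refine tendsto_of_tendsto_of_tendsto_of_le_of_le' tendsto_const_nhds hup
        (Eventually.of_forall fun B => sq_nonneg _) ?_
      filter_upwards [eventually_ge_atTop 1] with B hB
      have h1 := (worst_ge' hB hε0 hε1 (hτpos B)).trans ((hmin B hB).le.trans (MB_le hB hε0 hε1))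
      have h0 : 0 < ε + ε * (1 - ε) * (mu B / √B) ^ 2
          + ε * (τstar B / √B - (1 - ε) * (mu B / √B)) ^ 2 := by
        have : 0 < 1 - ε := by linarith
        positivity
      rw [ENNReal.ofReal_le_ofReal_iff'] at h1
      rw [le_div_iff₀ hε0]
      rcases h1 with h1 | h1 <;> linarith
    have habs : Tendsto (fun B : ℕ => τstar B / √B - (1 - ε) * (mu B / √B)) atTop (nhds 0) := by
      rw [tendsto_zero_iff_abs_tendsto_zero]
      have := (Real.continuous_sqrt.tendsto 0).comp hsq
      simpa [Function.comp_def, Real.sqrt_sq_eq_abs] using this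
    have := habs.add (hm.const_mul (1 - ε))
    simpa using this
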